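/- Fix a ∈ ℚ_p∖{0} and set Y_a = {v ∈ ℚ_pⁿ : q(v) ∈ a·(ℚ_p^×)²}, where a·(ℚ_p^×)² = {ab² : b ∈ ℚ_p^×}. Then for every continuous compactly supported f : ℚ_pⁿ → ℂ with support contained in Y_a, the function b ↦ |b|_p^{n−1}·(∫ f(b·x) dμ_a(x)) is integrable on ℚ_p∖{0} and ∫_{ℚ_pⁿ} f(v) dv = (1/2)·|2a|_p·∫_{ℚ_p∖{0}} (∫ f(b·x) dμ_a(x))·|b|_p^{n−1} db, where db is the Haar measure on ℚ_p giving ℤ_p volume 1. (This is the integral identity of Lemma 6.4 of the paper, in the nonarchimedean case F = ℚ_p; here |b|_p^{n−1} db = |b|_pⁿ · db/|b|_p.) -/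

import Mathlib

open MeasureTheory

/-!
Write `ν` for Haar measure on the ambient space. Two scaling facts carry the proof.

* Near `± c` the map `b ↦ a b²` is a similarity of ratio `|2ac|`, so comparing small balls shows
  that it pushes `|b| db` to `2 / |2a|` times Haar measure on the square class of `a`. The factor
  `2` counts the two square roots.
* For a compact open set `E` off the null cone, `μ_t(E)` is locally constant in `t`, hence equal to
  `ν(E ∩ q⁻¹B) / |B|` for every small ball `B` around `t`. Dilating by `b` maps such sets to such
  sets, multiplying `ν` by `|b|ⁿ` and `|B|` by `|b|²`, whence
  `|b|ⁿ μ_a(b⁻¹E) = |b|² μ_{ab²}(E)`.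

Substituting `t = ab²` in `ν(E) = ∫ μ_t(E) dt` then shows that on `Y_a` the measure `ν` is
`|2a| / 2` times the image of `|b|ⁿ⁻¹ db × μ_a` under `(b, x) ↦ b x`, and Fubini concludes.
-/

open Metric Set Filter Topology
open scoped Pointwise ENNReal

section Ultrametric

theorem isPiSystem_of_forall_eq_closedBall {X : Type*} [PseudoMetricSpace X] [IsUltrametricDist X]
    {C : Set (Set X)} (hC : ∀ s ∈ C, ∃ x r, s = closedBall x r) : IsPiSystem C := by
  intro s hs t ht hst
  obtain ⟨x, r, rfl⟩ := hC s hs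
  obtain ⟨y, r', rfl⟩ := hC t ht
  rcases IsUltrametricDist.closedBall_subset_trichotomy (x := x) (y := y) (r := r) (s := r')
    with hsub | hsub | hdisj
  · rwa [inter_eq_left.2 hsub]
  · rwa [inter_eq_right.2 hsub]
  · exact absurd hdisj.inter_eq hst.ne_empty

variable {X : Type*} [PseudoMetricSpace X] [IsUltrametricDist X] [SecondCountableTopology X]
  [MeasurableSpace X] [BorelSpace X] {μ ν : Measure X}

theorem measure_eq_of_eventually_measure_closedBall_eq [IsFiniteMeasure μ]
    (huniv : μ univ = ν univ)
    (h : ∀ x, ∀ᶠ r in 𝓝[>] 0, μ (closedBall x r) = ν (closedBall x r)) : μ = ν := by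
  let C : Set (Set X) := {s | ∃ x r, 0 < r ∧ s = closedBall x r ∧ μ s = ν s}
  have hbasis : TopologicalSpace.IsTopologicalBasis C := by
    refine TopologicalSpace.isTopologicalBasis_of_isOpen_of_nhds ?_ fun x O hx hO => ?_
    · rintro _ ⟨x, r, hr, rfl, -⟩
      exact IsUltrametricDist.isOpen_closedBall x hr.ne'
    · obtain ⟨δ, hδ, hδO⟩ := nhds_basis_closedBall.mem_iff.1 (hO.mem_nhds hx)
      obtain ⟨r, hr, hr0, hrδ⟩ := ((h x).and (Ioc_mem_nhdsGT hδ)).exists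
      exact ⟨closedBall x r, ⟨x, r, hr0, rfl, hr⟩, mem_closedBall_self hr0.le,
        (closedBall_subset_closedBall hrδ).trans hδO⟩
  refine ext_of_generate_finite C ?_ (isPiSystem_of_forall_eq_closedBall ?_) ?_ huniv
  · rw [BorelSpace.measurable_eq (α := X), hbasis.borel_eq_generateFrom]
  · rintro _ ⟨x, r, -, rfl, -⟩
    exact ⟨x, r, rfl⟩
  · rintro _ ⟨x, r, -, -, hr⟩
    exact hr

theorem restrict_closedBall_eq_of_eventually_measure_closedBall_eq {x : X} {r : ℝ} (hr : 0 < r)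
    (hfin : μ (closedBall x r) ≠ ∞) (hxr : μ (closedBall x r) = ν (closedBall x r))
    (h : ∀ y ∈ closedBall x r, ∀ᶠ s in 𝓝[>] 0, μ (closedBall y s) = ν (closedBall y s)) :
    μ.restrict (closedBall x r) = ν.restrict (closedBall x r) := by
  have : Fact (μ (closedBall x r) < ∞) := ⟨hfin.lt_top⟩
  have hclopen := IsUltrametricDist.isClopen_closedBall x hr.ne'
  refine measure_eq_of_eventually_measure_closedBall_eq (by simpa using hxr) fun y => ?_
  simp only [Measure.restrict_apply isClosed_closedBall.measurableSet]
  by_cases hy : y ∈ closedBall x r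
  · filter_upwards [h y hy, Ioc_mem_nhdsGT hr] with s hs hsr
    have hsub : closedBall y s ⊆ closedBall x r :=
      IsUltrametricDist.closedBall_eq_of_mem hy ▸ closedBall_subset_closedBall hsr.2
    rwa [inter_eq_left.2 hsub]
  · obtain ⟨δ, hδ, hδy⟩ := nhds_basis_closedBall.mem_iff.1 (hclopen.compl.isOpen.mem_nhds hy)
    filter_upwards [Ioc_mem_nhdsGT hδ] with s hs
    have hdisj : Disjoint (closedBall y s) (closedBall x r) :=
      subset_compl_iff_disjoint_right.1 ((closedBall_subset_closedBall hs.2).trans hδy)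
    rw [hdisj.inter_eq, measure_empty, measure_empty]

theorem restrict_eq_of_eventually_measure_closedBall_eq [IsLocallyFiniteMeasure μ] {U : Set X}
    (hU : IsOpen U)
    (h : ∀ x ∈ U, ∀ᶠ r in 𝓝[>] 0, μ (closedBall x r) = ν (closedBall x r)) :
    μ.restrict U = ν.restrict U := by
  have hlocal : ∀ x ∈ U, ∃ r > 0, μ.restrict (closedBall x r) = ν.restrict (closedBall x r) := by
    intro x hx
    obtain ⟨O, hO, hOfin⟩ := μ.finiteAt_nhds x
    obtain ⟨δ, hδ, hδO⟩ := nhds_basis_closedBall.mem_iff.1 (inter_mem hO (hU.mem_nhds hx))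
    obtain ⟨r, hxr, hr0, hrδ⟩ := ((h x hx).and (Ioc_mem_nhdsGT hδ)).exists
    have hsub := (closedBall_subset_closedBall hrδ).trans hδO
    have hfin := (measure_mono (hsub.trans inter_subset_left)).trans_lt hOfin
    exact ⟨r, hr0, restrict_closedBall_eq_of_eventually_measure_closedBall_eq hr0 hfin.ne hxr
      fun y hy => h y (hsub hy).2⟩
  choose! r hr0 hr using hlocal
  obtain ⟨T, hTU, hT, hcover⟩ := TopologicalSpace.countable_cover_nhdsWithin
    fun x hx => mem_nhdsWithin_of_mem_nhds (closedBall_mem_nhds x (hr0 x hx))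
  exact Measure.restrict_congr_mono hcover
    ((Measure.restrict_biUnion_congr hT).2 fun x hx => hr x (hTU hx))

end Ultrametric

theorem norm_eq_norm_of_norm_sub_lt {E : Type*} [SeminormedAddCommGroup E] [IsUltrametricDist E]
    {x y : E} (h : ‖x - y‖ < ‖y‖) : ‖x‖ = ‖y‖ := by
  simpa using IsUltrametricDist.norm_eq_of_add_norm_lt_max (x := x) (y := -y)
    (by rw [← sub_eq_add_neg, norm_neg]; exact h.trans_le (le_max_right _ _))

section Homogeneous

/-- `ν` is homogeneous of degree `d` if dilation by `b ≠ 0` multiplies it by `|b| ^ d`. A Haar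
measure of a local field `K` is homogeneous of degree `1` exactly when the absolute value of `K` is
the normalized one. -/
def IsHomogeneousMeasure (K : Type*) {V : Type*} [NormedField K] [SMul K V] [MeasurableSpace V]
    (d : ℕ) (ν : Measure V) : Prop :=
  ∀ b : K, b ≠ 0 → ∀ s : Set V, ν (b • s) = ‖b‖ₑ ^ d * ν s

theorem IsHomogeneousMeasure.measure_eq_mul_preimage_smul {K V : Type*} [NormedField K]
    [MulAction K V] [MeasurableSpace V] {d : ℕ} {ν : Measure V} (hν : IsHomogeneousMeasure K d ν)
    {b : K} (hb : b ≠ 0) (s : Set V) : ν s = ‖b‖ₑ ^ d * ν ((b • ·) ⁻¹' s) := by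
  rw [← hν b hb, preimage_smul₀ hb, smul_inv_smul₀ hb]

variable {K V : Type*} [NontriviallyNormedField K] [NormedAddCommGroup V] [NormedSpace K V]
  [MeasurableSpace V] [BorelSpace V]

theorem IsHomogeneousMeasure.measure_closedBall_norm_mul {ν : Measure V} [ν.IsAddHaarMeasure]
    {d : ℕ} (hν : IsHomogeneousMeasure K d ν) {b : K} (hb : b ≠ 0) (x y : V) (r : ℝ) :
    ν (closedBall x (‖b‖ * r)) = ‖b‖ₑ ^ d * ν (closedBall y r) := by
  rw [Measure.addHaar_closedBall_center, ← Measure.addHaar_closedBall_center ν (b • y),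
    ← smul_closedBall' hb, hν b hb]

theorem isHomogeneousMeasure_of_measure_closedBall [ProperSpace V] {ν : Measure V}
    [ν.IsAddHaarMeasure] {d : ℕ}
    (h : ∀ b : K, b ≠ 0 → ν (closedBall 0 ‖b‖) = ‖b‖ₑ ^ d * ν (closedBall 0 1)) :
    IsHomogeneousMeasure K d ν := by
  intro b hb s
  have hsmul : ν (Units.mk0 b hb • closedBall (0 : V) 1) =
      (‖b‖₊ ^ d : NNReal) * ν (closedBall 0 1) := by
    rw [Units.smul_mk0, smul_closedBall' hb, smul_zero, mul_one, h b hb, enorm_eq_nnnorm,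
      ENNReal.coe_pow]
  have hchar := distribHaarChar_eq_of_measure_smul_eq_mul
    (measure_closedBall_pos ν 0 one_pos).ne' (isCompact_closedBall 0 1).measure_ne_top hsmul
  rw [← Units.smul_mk0 hb, ← distribHaarChar_mul ν, hchar, enorm_eq_nnnorm, ENNReal.coe_pow]

theorem IsHomogeneousMeasure.pi {K ι : Type*} [NontriviallyNormedField K] [ProperSpace K]
    [MeasurableSpace K] [BorelSpace K] [Fintype ι] {κ : Measure K} [κ.IsAddHaarMeasure]
    (hκ : IsHomogeneousMeasure K 1 κ) :
    IsHomogeneousMeasure K (Fintype.card ι) (Measure.pi fun _ : ι => κ) := by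
  refine isHomogeneousMeasure_of_measure_closedBall fun b hb => ?_
  have hball : κ (closedBall 0 ‖b‖) = ‖b‖ₑ * κ (closedBall 0 1) := by
    simpa using hκ.measure_closedBall_norm_mul hb 0 0 1
  simp [Measure.pi_closedBall, hball, mul_pow]

end Homogeneous

section SquareClass

/-- The coset `a (Kˣ)²` of the group of nonzero squares. -/
def squareClass {K : Type*} [Field K] (a : K) : Set K :=
  {t | ∃ b : K, b ≠ 0 ∧ t = a * b ^ 2}

theorem ne_zero_of_mem_squareClass {K : Type*} [Field K] {a t : K} (ha : a ≠ 0)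
    (ht : t ∈ squareClass a) : t ≠ 0 := by
  obtain ⟨b, hb, rfl⟩ := ht
  exact mul_ne_zero ha (pow_ne_zero 2 hb)

theorem isOpen_squareClass {K : Type*} [NontriviallyNormedField K] [CompleteSpace K]
    [NeZero (2 : K)] {a : K} (ha : a ≠ 0) : IsOpen (squareClass a) := by
  rw [isOpen_iff_mem_nhds]
  rintro _ ⟨b, hb, rfl⟩
  have hderiv : HasStrictDerivAt (fun b : K => a * b ^ 2) (a * (2 * b)) b := by
    simpa using (hasStrictDerivAt_pow 2 b).const_mul a
  rw [← hderiv.map_nhds_eq (mul_ne_zero ha (mul_ne_zero two_ne_zero hb)), Filter.mem_map]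
  filter_upwards [isOpen_ne.mem_nhds hb] with c hc
  exact ⟨c, hc, rfl⟩

theorem norm_two_mul_le {K : Type*} [NormedField K] [IsUltrametricDist K] (c : K) :
    ‖2 * c‖ ≤ ‖c‖ := by
  rw [two_mul]
  simpa using IsUltrametricDist.norm_add_le_max c c

theorem preimage_mul_sq_closedBall {K : Type*} [NormedField K] [IsUltrametricDist K]
    [NeZero (2 : K)] {a c : K} (ha : a ≠ 0) (hc : c ≠ 0) {r : ℝ} (hr : r < ‖2 * c‖) :
    (fun b : K => a * b ^ 2) ⁻¹' closedBall (a * c ^ 2) (‖2 * a * c‖ * r) =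
      closedBall c r ∪ closedBall (-c) r := by
  have ha0 : 0 < ‖a‖ := norm_pos_iff.2 ha
  have hc0 : 0 < ‖2 * c‖ := norm_pos_iff.2 (mul_ne_zero two_ne_zero hc)
  ext b
  have hfactor : a * b ^ 2 - a * c ^ 2 = a * ((b - c) * (b + c)) := by ring
  have hradius : ‖2 * a * c‖ * r = ‖a‖ * (‖2 * c‖ * r) := by
    simp only [norm_mul]; ring
  have hadd (h : ‖b - c‖ < ‖2 * c‖) : ‖b + c‖ = ‖2 * c‖ :=
    norm_eq_norm_of_norm_sub_lt (by rwa [show b + c - 2 * c = b - c by ring])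
  have hsub (h : ‖b + c‖ < ‖2 * c‖) : ‖b - c‖ = ‖2 * c‖ := by
    rw [norm_sub_rev]
    refine norm_eq_norm_of_norm_sub_lt ?_
    rwa [show c - b - 2 * c = -(b + c) by ring, norm_neg]
  simp only [mem_preimage, mem_union, mem_closedBall, dist_eq_norm, sub_neg_eq_add, hfactor,
    hradius, norm_mul a, mul_le_mul_iff_right₀ ha0, norm_mul (b - c)]
  constructor
  · intro h
    rcases lt_or_ge ‖b - c‖ ‖2 * c‖ with hlt | hge
    · rw [hadd hlt, mul_comm] at h
      exact Or.inl (le_of_mul_le_mul_left h hc0)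
    · have hlt : ‖b + c‖ < ‖2 * c‖ := by
        by_contra! hge'
        nlinarith [mul_le_mul hge hge' hc0.le (norm_nonneg _)]
      rw [hsub hlt] at h
      exact Or.inr (le_of_mul_le_mul_left h hc0)
  · rintro (h | h)
    · rw [hadd (h.trans_lt hr), mul_comm]
      gcongr
    · rw [hsub (h.trans_lt hr)]
      gcongr

theorem disjoint_closedBall_neg {K : Type*} [NormedField K] [IsUltrametricDist K] {c : K} {r : ℝ}
    (hr : r < ‖2 * c‖) : Disjoint (closedBall c r) (closedBall (-c) r) := by
  refine disjoint_left.2 fun b hb hb' => hr.not_ge ?_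
  calc ‖2 * c‖ = dist c (-c) := by rw [dist_eq_norm, sub_neg_eq_add, two_mul]
    _ ≤ max (dist c b) (dist b (-c)) := dist_triangle_max _ _ _
    _ ≤ r := max_le (mem_closedBall'.1 hb) hb'

theorem withDensity_enorm_closedBall {K : Type*} [NormedField K] [IsUltrametricDist K]
    [MeasurableSpace K] [BorelSpace K] (κ : Measure K) {c : K} {r : ℝ} (hr : r < ‖c‖) :
    (κ.restrict {b | b ≠ 0}).withDensity (‖·‖ₑ) (closedBall c r) =
      ‖c‖ₑ * κ (closedBall c r) := by
  have hmeas : MeasurableSet (closedBall c r) := isClosed_closedBall.measurableSet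
  have hnorm : ∀ b ∈ closedBall c r, ‖b‖ = ‖c‖ := fun b hb =>
    norm_eq_norm_of_norm_sub_lt ((mem_closedBall_iff_norm.1 hb).trans_lt hr)
  have hne : closedBall c r ⊆ {b | b ≠ 0} := fun b hb =>
    norm_ne_zero_iff.1 (hnorm b hb ▸ ((dist_nonneg.trans (mem_closedBall.1 hb)).trans_lt hr).ne')
  rw [withDensity_apply _ hmeas, Measure.restrict_restrict hmeas, inter_eq_left.2 hne,
    setLIntegral_congr_fun (g := fun _ => ‖c‖ₑ) hmeas fun b hb => by
      simp only [← ofReal_norm, hnorm b hb], setLIntegral_const]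

variable {K : Type*} [NontriviallyNormedField K] [IsUltrametricDist K] [ProperSpace K]
  [NeZero (2 : K)] [MeasurableSpace K] [BorelSpace K] {κ : Measure K} [κ.IsAddHaarMeasure]

theorem map_mul_sq_closedBall (hκ : IsHomogeneousMeasure K 1 κ) {a c : K} (ha : a ≠ 0)
    (hc : c ≠ 0) {r : ℝ} (hr : r < ‖2 * c‖) :
    2⁻¹ * ‖2 * a‖ₑ * ((κ.restrict {b | b ≠ 0}).withDensity (‖·‖ₑ)).map (fun b => a * b ^ 2)
        (closedBall (a * c ^ 2) (‖2 * a * c‖ * r)) =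
      κ (closedBall (a * c ^ 2) (‖2 * a * c‖ * r)) := by
  have hrc : r < ‖c‖ := hr.trans_le (norm_two_mul_le c)
  rw [Measure.map_apply (by fun_prop) isClosed_closedBall.measurableSet,
    preimage_mul_sq_closedBall ha hc hr,
    measure_union (disjoint_closedBall_neg hr) isClosed_closedBall.measurableSet,
    withDensity_enorm_closedBall κ hrc, withDensity_enorm_closedBall κ (by rwa [norm_neg]),
    hκ.measure_closedBall_norm_mul (mul_ne_zero (mul_ne_zero two_ne_zero ha) hc) _ c,
    Measure.addHaar_closedBall_center κ (-c), ← Measure.addHaar_closedBall_center κ c, enorm_neg,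
    ← two_mul, pow_one, enorm_mul (2 * a) c]
  calc 2⁻¹ * ‖2 * a‖ₑ * (2 * (‖c‖ₑ * κ (closedBall c r)))
      = 2⁻¹ * 2 * (‖2 * a‖ₑ * ‖c‖ₑ * κ (closedBall c r)) := by ring
    _ = ‖2 * a‖ₑ * ‖c‖ₑ * κ (closedBall c r) := by
      rw [ENNReal.inv_mul_cancel two_ne_zero ENNReal.ofNat_ne_top, one_mul]

theorem restrict_squareClass (hκ : IsHomogeneousMeasure K 1 κ) {a : K} (ha : a ≠ 0) :
    κ.restrict (squareClass a) =
      ((2⁻¹ * ‖2 * a‖ₑ) • ((κ.restrict {b | b ≠ 0}).withDensity (‖·‖ₑ)).map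
        fun b => a * b ^ 2).restrict (squareClass a) := by
  refine restrict_eq_of_eventually_measure_closedBall_eq (isOpen_squareClass ha) ?_
  rintro _ ⟨c, hc, rfl⟩
  have hd : 0 < ‖2 * a * c‖ := norm_pos_iff.2 (mul_ne_zero (mul_ne_zero two_ne_zero ha) hc)
  have hc2 : 0 < ‖2 * c‖ := norm_pos_iff.2 (mul_ne_zero two_ne_zero hc)
  filter_upwards [Ioo_mem_nhdsGT (mul_pos hd hc2)] with r hr
  rw [← mul_div_cancel₀ r hd.ne', Measure.smul_apply, smul_eq_mul,
    map_mul_sq_closedBall hκ ha hc ((div_lt_iff₀' hd).2 hr.2)]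

theorem lintegral_mul_sq (hκ : IsHomogeneousMeasure K 1 κ) {a : K} (ha : a ≠ 0)
    {g : K → ℝ≥0∞} (hg : Measurable g) (hga : Function.support g ⊆ squareClass a) :
    ∫⁻ t, g t ∂κ = 2⁻¹ * ‖2 * a‖ₑ * ∫⁻ b in {b | b ≠ 0}, ‖b‖ₑ * g (a * b ^ 2) ∂κ := by
  rw [← setLIntegral_eq_of_support_subset hga, restrict_squareClass hκ ha,
    setLIntegral_eq_of_support_subset hga, lintegral_smul_measure, smul_eq_mul,
    lintegral_map hg (by fun_prop), lintegral_withDensity_eq_lintegral_mul _ (by fun_prop)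
      (g := fun b => g (a * b ^ 2)) (hg.comp (by fun_prop))]
  rfl

end SquareClass

section GelfandLeray

/-- The test functions for Gelfand–Leray families: the locally constant functions whose support is
compact and avoids the null set of `q`. -/
structure IsTestFunction {K V : Type*} [Zero K] [TopologicalSpace V] (q : V → K) (f : V → ℂ) :
    Prop where
  isLocallyConstant : IsLocallyConstant f
  hasCompactSupport : HasCompactSupport f
  ne_zero : ∀ v ∈ tsupport f, q v ≠ 0

/-- A Gelfand–Leray family for `q`: measures `μ t` on the level sets `{q = t}`, `t ≠ 0`, which
disintegrate `ν` over `κ` off the null set of `q`, and against which the integral of a test function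
is a locally constant, compactly supported function of `t ≠ 0`. The value `μ 0` is arbitrary. -/
structure IsGelfandLerayFamily {K V : Type*} [Zero K] [TopologicalSpace K] [MeasurableSpace K]
    [TopologicalSpace V] [MeasurableSpace V] (κ : Measure K) (ν : Measure V) (q : V → K)
    (μ : K → Measure V) : Prop where
  finite_on_compacts : ∀ t, t ≠ 0 → IsFiniteMeasureOnCompacts (μ t)
  measure_ne : ∀ t, t ≠ 0 → μ t {v | q v ≠ t} = 0
  eventually_eq : ∀ f, IsTestFunction q f → ∀ t, t ≠ 0 →
    ∀ᶠ s in 𝓝 t, ∫ v, f v ∂μ s = ∫ v, f v ∂μ t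
  exists_compact : ∀ f, IsTestFunction q f →
    ∃ C : Set K, IsCompact C ∧ 0 ∉ C ∧ ∀ t, t ≠ 0 → t ∉ C → ∫ v, f v ∂μ t = 0
  integral_eq : ∀ f, IsTestFunction q f →
    ∫ v, f v ∂ν = ∫ t in {t | t ≠ 0}, ∫ v, f v ∂μ t ∂κ

/-- The compact open sets off the null set of `q`, that is, those whose indicators are test
functions. -/
structure IsAdmissibleSet {K V : Type*} [Zero K] [TopologicalSpace V] (q : V → K) (E : Set V) :
    Prop where
  isCompact : IsCompact E
  isOpen : IsOpen E
  ne_zero : ∀ v ∈ E, q v ≠ 0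

namespace IsAdmissibleSet

theorem isTestFunction_indicator {K V : Type*} [Zero K] [TopologicalSpace V] [T2Space V]
    {q : V → K} {E : Set V} (hE : IsAdmissibleSet q E) : IsTestFunction q (E.indicator 1) := by
  have hsub : tsupport (E.indicator (1 : V → ℂ)) ⊆ E :=
    closure_minimal support_indicator_subset hE.isCompact.isClosed
  exact ⟨(LocallyConstant.charFn ℂ ⟨hE.isCompact.isClosed, hE.isOpen⟩).isLocallyConstant,
    hE.isCompact.of_isClosed_subset isClosed_closure hsub, fun v hv => hE.ne_zero v (hsub hv)⟩

theorem inter_preimage {K V : Type*} [Zero K] [TopologicalSpace K] [TopologicalSpace V]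
    {q : V → K} {E : Set V} (hE : IsAdmissibleSet q E) (hq : Continuous q) {S : Set K}
    (hS : IsClopen S) : IsAdmissibleSet q (E ∩ q ⁻¹' S) :=
  ⟨hE.isCompact.inter_right (hS.isClosed.preimage hq), hE.isOpen.inter (hS.isOpen.preimage hq),
    fun v hv => hE.ne_zero v hv.1⟩

theorem preimage_smul {K V : Type*} [Field K] [TopologicalSpace V] [MulAction K V]
    [ContinuousConstSMul K V] {q : V → K} (hqs : ∀ (b : K) v, q (b • v) = b ^ 2 * q v) {E : Set V}
    (hE : IsAdmissibleSet q E) {b : K} (hb : b ≠ 0) : IsAdmissibleSet q ((b • ·) ⁻¹' E) :=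
  ⟨(Homeomorph.smulOfNeZero b hb).isCompact_preimage.2 hE.isCompact,
    hE.isOpen.preimage (continuous_const_smul b),
    fun v hv hv0 => hE.ne_zero _ hv (by rw [hqs, hv0, mul_zero])⟩

end IsAdmissibleSet

theorem preimage_smul_preimage_closedBall {K V : Type*} [NormedField K] [SMul K V] {q : V → K}
    (hqs : ∀ (b : K) v, q (b • v) = b ^ 2 * q v) {b : K} (hb : b ≠ 0) (a : K) (r : ℝ) :
    (b • ·) ⁻¹' (q ⁻¹' closedBall (a * b ^ 2) (‖b ^ 2‖ * r)) = q ⁻¹' closedBall a r := by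
  ext v
  have hdist : dist (b ^ 2 * q v) (a * b ^ 2) = ‖b ^ 2‖ * dist (q v) a := by
    rw [mul_comm a, dist_eq_norm, ← mul_sub, norm_mul, ← dist_eq_norm]
  simp only [mem_preimage, mem_closedBall, hqs, hdist,
    mul_le_mul_iff_right₀ (norm_pos_iff.2 (pow_ne_zero 2 hb))]

theorem integral_indicator_complex_one {X : Type*} [MeasurableSpace X] {E : Set X}
    (hE : MeasurableSet E) (ν : Measure X) :
    ∫ v, E.indicator (1 : X → ℂ) v ∂ν = (ν.real E : ℂ) := by
  rw [Pi.one_def, integral_indicator_const _ hE, Complex.real_smul, mul_one]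

namespace IsGelfandLerayFamily

theorem measure_inter_preimage {K V : Type*} [Zero K] [TopologicalSpace K] [MeasurableSpace K]
    [TopologicalSpace V] [MeasurableSpace V] {κ : Measure K} {ν : Measure V} {q : V → K}
    {μ : K → Measure V} (h : IsGelfandLerayFamily κ ν q μ) {t : K} (ht : t ≠ 0) (E : Set V)
    (S : Set K) : μ t (E ∩ q ⁻¹' S) = S.indicator (fun s => μ s E) t := by
  have hfiber : ∀ᵐ v ∂μ t, q v = t := h.measure_ne t ht
  by_cases htS : t ∈ S
  · rw [indicator_of_mem htS]
    refine measure_congr (hfiber.mono fun v hv => propext ?_)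
    exact and_iff_left (show q v ∈ S from hv ▸ htS)
  · rw [indicator_of_notMem htS, measure_eq_zero_iff_ae_notMem]
    exact hfiber.mono fun v hv hvS => htS (hv ▸ hvS.2)

variable {K V : Type*} [NontriviallyNormedField K] [MeasurableSpace K]
  [NormedAddCommGroup V] [MeasurableSpace V] [BorelSpace V]
  {κ : Measure K} {ν : Measure V} {q : V → K} {μ : K → Measure V} {E : Set V}

theorem eventually_measure_eq (h : IsGelfandLerayFamily κ ν q μ) (hE : IsAdmissibleSet q E)
    {t : K} (ht : t ≠ 0) : ∀ᶠ s in 𝓝 t, μ s E = μ t E := by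
  filter_upwards [h.eventually_eq _ hE.isTestFunction_indicator t ht, isOpen_ne.mem_nhds ht]
    with s hs hs0
  have := h.finite_on_compacts s hs0
  have := h.finite_on_compacts t ht
  rwa [integral_indicator_complex_one hE.isOpen.measurableSet,
    integral_indicator_complex_one hE.isOpen.measurableSet, Complex.ofReal_inj,
    measureReal_eq_measureReal_iff hE.isCompact.measure_ne_top hE.isCompact.measure_ne_top] at hs

theorem exists_compact_measure_eq_zero (h : IsGelfandLerayFamily κ ν q μ)
    (hE : IsAdmissibleSet q E) :
    ∃ C : Set K, IsCompact C ∧ 0 ∉ C ∧ ∀ t, t ≠ 0 → t ∉ C → μ t E = 0 := by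
  obtain ⟨C, hC, hC0, hvanish⟩ := h.exists_compact _ hE.isTestFunction_indicator
  refine ⟨C, hC, hC0, fun t ht htC => ?_⟩
  have := h.finite_on_compacts t ht
  have hzero := hvanish t ht htC
  rwa [integral_indicator_complex_one hE.isOpen.measurableSet, Complex.ofReal_eq_zero,
    measureReal_eq_zero_iff hE.isCompact.measure_ne_top] at hzero

theorem isLocallyConstant_indicator_measure (h : IsGelfandLerayFamily κ ν q μ)
    (hE : IsAdmissibleSet q E) : IsLocallyConstant ({t | t ≠ 0}.indicator fun t => μ t E) := by
  refine (IsLocallyConstant.iff_eventually_eq _).2 fun t => ?_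
  rcases eq_or_ne t 0 with rfl | ht
  · obtain ⟨C, hC, hC0, hvanish⟩ := h.exists_compact_measure_eq_zero hE
    filter_upwards [hC.isClosed.isOpen_compl.mem_nhds hC0] with s hs
    have h0 : (0 : K) ∉ {t : K | t ≠ 0} := fun h0 => h0 rfl
    rw [indicator_of_notMem h0, indicator_apply_eq_zero]
    exact fun hs0 => hvanish s hs0 hs
  · filter_upwards [h.eventually_measure_eq hE ht, isOpen_ne.mem_nhds ht] with s hs hs0
    rw [indicator_of_mem hs0, indicator_of_mem (by exact ht), hs]

theorem hasCompactSupport_indicator_measure (h : IsGelfandLerayFamily κ ν q μ)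
    (hE : IsAdmissibleSet q E) : HasCompactSupport ({t | t ≠ 0}.indicator fun t => μ t E) := by
  obtain ⟨C, hC, -, hvanish⟩ := h.exists_compact_measure_eq_zero hE
  exact HasCompactSupport.intro hC fun t ht => indicator_apply_eq_zero.2 fun ht0 => hvanish t ht0 ht

theorem measureReal_eq_integral (h : IsGelfandLerayFamily κ ν q μ) (hE : IsAdmissibleSet q E) :
    ν.real E = ∫ t in {t | t ≠ 0}, (μ t).real E ∂κ := by
  have heq := h.integral_eq _ hE.isTestFunction_indicator
  simp only [integral_indicator_complex_one hE.isOpen.measurableSet] at heq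
  rwa [integral_complex_ofReal, Complex.ofReal_inj] at heq

variable [BorelSpace K]

theorem integrableOn_measureReal [IsFiniteMeasureOnCompacts κ]
    (h : IsGelfandLerayFamily κ ν q μ) (hE : IsAdmissibleSet q E) :
    IntegrableOn (fun t => (μ t).real E) {t | t ≠ 0} κ := by
  have hcont := ((h.isLocallyConstant_indicator_measure hE).comp ENNReal.toReal).continuous
  have hsupp := (h.hasCompactSupport_indicator_measure hE).comp_left ENNReal.toReal_zero
  have hint := hcont.integrable_of_hasCompactSupport (μ := κ) hsupp
  refine hint.integrableOn.congr_fun (fun t ht => ?_) isOpen_ne.measurableSet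
  rw [Function.comp_apply, indicator_of_mem ht, measureReal_def]

theorem measure_eq_lintegral [IsFiniteMeasureOnCompacts κ] [IsFiniteMeasureOnCompacts ν]
    (h : IsGelfandLerayFamily κ ν q μ) (hE : IsAdmissibleSet q E) :
    ν E = ∫⁻ t in {t | t ≠ 0}, μ t E ∂κ := by
  rw [← ofReal_measureReal hE.isCompact.measure_ne_top, h.measureReal_eq_integral hE,
    ofReal_integral_eq_lintegral_ofReal (h.integrableOn_measureReal hE)
      (.of_forall fun _ => measureReal_nonneg)]
  refine setLIntegral_congr_fun isOpen_ne.measurableSet fun t ht => ?_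
  have := h.finite_on_compacts t ht
  exact ofReal_measureReal hE.isCompact.measure_ne_top

theorem eventually_measure_inter_preimage_closedBall [IsUltrametricDist K]
    [IsFiniteMeasureOnCompacts κ] [IsFiniteMeasureOnCompacts ν]
    (h : IsGelfandLerayFamily κ ν q μ) (hq : Continuous q) (hE : IsAdmissibleSet q E) {t : K}
    (ht : t ≠ 0) :
    ∀ᶠ r in 𝓝[>] 0, ν (E ∩ q ⁻¹' closedBall t r) = μ t E * κ (closedBall t r) := by
  obtain ⟨δ, hδ, hδt⟩ := nhds_basis_closedBall.mem_iff.1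
    ((h.eventually_measure_eq hE ht).and (isOpen_ne.mem_nhds ht))
  filter_upwards [Ioc_mem_nhdsGT hδ] with r hr
  have hclopen := IsUltrametricDist.isClopen_closedBall t hr.1.ne'
  have hmeas := hclopen.isOpen.measurableSet
  have hsub := (closedBall_subset_closedBall hr.2).trans hδt
  have hne : closedBall t r ⊆ {s | s ≠ 0} := fun s hs => (hsub hs).2
  rw [h.measure_eq_lintegral (hE.inter_preimage hq hclopen),
    setLIntegral_congr_fun isOpen_ne.measurableSet fun s hs => h.measure_inter_preimage hs E _,
    setLIntegral_indicator hmeas, inter_eq_left.2 hne,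
    setLIntegral_congr_fun hmeas fun s hs => (hsub hs).1, setLIntegral_const]

variable [IsUltrametricDist K] [ProperSpace K] [NormedSpace K V] [κ.IsAddHaarMeasure]
  [IsFiniteMeasureOnCompacts ν] {n : ℕ}

theorem enorm_pow_mul_measure_preimage_smul (h : IsGelfandLerayFamily κ ν q μ)
    (hκ : IsHomogeneousMeasure K 1 κ) (hν : IsHomogeneousMeasure K n ν) (hq : Continuous q)
    (hqs : ∀ (b : K) v, q (b • v) = b ^ 2 * q v) (hE : IsAdmissibleSet q E) {a b : K}
    (ha : a ≠ 0) (hb : b ≠ 0) :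
    ‖b‖ₑ ^ n * μ a ((b • ·) ⁻¹' E) = ‖b‖ₑ ^ 2 * μ (a * b ^ 2) E := by
  have hb2 : b ^ 2 ≠ 0 := pow_ne_zero 2 hb
  have hball := eventually_nhdsGT_zero_mul_left (norm_pos_iff.2 hb2)
    (h.eventually_measure_inter_preimage_closedBall hq hE (mul_ne_zero ha hb2))
  have hball' := h.eventually_measure_inter_preimage_closedBall hq (hE.preimage_smul hqs hb) ha
  obtain ⟨r, ⟨hr', hr⟩, hr0⟩ := ((hball'.and hball).and self_mem_nhdsWithin).exists
  have hpos : κ (closedBall a r) ≠ 0 := (measure_closedBall_pos κ a hr0).ne'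
  have hfin : κ (closedBall a r) ≠ ∞ := (isCompact_closedBall a r).measure_ne_top
  refine (ENNReal.mul_left_inj hpos hfin).1 ?_
  calc ‖b‖ₑ ^ n * μ a ((b • ·) ⁻¹' E) * κ (closedBall a r)
      = ‖b‖ₑ ^ n * ν ((b • ·) ⁻¹' (E ∩ q ⁻¹' closedBall (a * b ^ 2) (‖b ^ 2‖ * r))) := by
        rw [preimage_inter, preimage_smul_preimage_closedBall hqs hb, hr', mul_assoc]
    _ = μ (a * b ^ 2) E * κ (closedBall (a * b ^ 2) (‖b ^ 2‖ * r)) := by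
        rw [← hν.measure_eq_mul_preimage_smul hb, hr]
    _ = ‖b‖ₑ ^ 2 * μ (a * b ^ 2) E * κ (closedBall a r) := by
        rw [hκ.measure_closedBall_norm_mul hb2 _ a, enorm_pow, pow_one]
        ring

theorem measure_eq_lintegral_preimage_smul [NeZero (2 : K)] (h : IsGelfandLerayFamily κ ν q μ)
    (hκ : IsHomogeneousMeasure K 1 κ) (hn : 1 ≤ n) (hν : IsHomogeneousMeasure K n ν)
    (hq : Continuous q) (hqs : ∀ (b : K) v, q (b • v) = b ^ 2 * q v) (hE : IsAdmissibleSet q E)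
    {a : K} (ha : a ≠ 0) (hEa : E ⊆ q ⁻¹' squareClass a) :
    ν E = 2⁻¹ * ‖2 * a‖ₑ *
      ∫⁻ b in {b | b ≠ 0}, ‖b‖ₑ ^ (n - 1) * μ a ((b • ·) ⁻¹' E) ∂κ := by
  have hsupp : Function.support ({t | t ≠ 0}.indicator fun t => μ t E) ⊆ squareClass a := by
    refine Function.support_subset_iff'.2 fun t ht => indicator_apply_eq_zero.2 fun ht0 => ?_
    exact measure_mono_null (fun v hv (hvt : q v = t) => ht (hvt ▸ hEa hv)) (h.measure_ne t ht0)
  rw [h.measure_eq_lintegral hE, ← lintegral_indicator isOpen_ne.measurableSet,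
    lintegral_mul_sq hκ ha (h.isLocallyConstant_indicator_measure hE).continuous.measurable hsupp]
  congr 1
  refine setLIntegral_congr_fun isOpen_ne.measurableSet fun b (hb : b ≠ 0) => ?_
  have hab : a * b ^ 2 ∈ {t : K | t ≠ 0} := mul_ne_zero ha (pow_ne_zero 2 hb)
  refine (ENNReal.mul_right_inj (enorm_ne_zero.2 hb) enorm_ne_top).1 ?_
  rw [indicator_of_mem hab, ← mul_assoc, ← sq, ← mul_assoc, mul_pow_sub_one (by omega),
    h.enorm_pow_mul_measure_preimage_smul hκ hν hq hqs hE ha hb]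

end IsGelfandLerayFamily

end GelfandLeray

section PolarMeasure

/-- The image under `(b, x) ↦ b • x` of the product of `|b| ^ m dκ(b)` with `ρ`. -/
noncomputable def polarMeasure {K V : Type*} [NormedField K] [MeasurableSpace K] [SMul K V]
    [MeasurableSpace V] (κ : Measure K) (m : ℕ) (ρ : Measure V) : Measure V :=
  (((κ.restrict {b | b ≠ 0}).withDensity fun b => ((‖b‖₊ ^ m : NNReal) : ℝ≥0∞)).prod ρ).map
    fun z => z.1 • z.2

variable {K V : Type*} [NormedField K] [MeasurableSpace K] [BorelSpace K]
  [NormedAddCommGroup V] [NormedSpace K V] [SecondCountableTopology V] [MeasurableSpace V]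
  [BorelSpace V] {κ : Measure K} {m : ℕ} {ρ : Measure V} [SFinite ρ]

theorem polarMeasure_apply {E : Set V} (hE : MeasurableSet E) :
    polarMeasure κ m ρ E = ∫⁻ b in {b | b ≠ 0}, ‖b‖ₑ ^ m * ρ ((b • ·) ⁻¹' E) ∂κ := by
  have hsmul : Measurable fun z : K × V => z.1 • z.2 := by fun_prop
  rw [polarMeasure, Measure.map_apply hsmul hE, Measure.prod_apply (hsmul hE),
    lintegral_withDensity_eq_lintegral_mul _ (by fun_prop)
      (measurable_measure_prodMk_left (hsmul hE))]
  simp only [Pi.mul_apply, ENNReal.coe_pow, ← enorm_eq_nnnorm]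
  rfl

theorem integral_polarMeasure [SFinite κ] {F : Type*} [NormedAddCommGroup F] [NormedSpace ℝ F]
    {f : V → F} (hf : Integrable f (polarMeasure κ m ρ)) :
    IntegrableOn (fun b : K => ‖b‖ ^ m • ∫ x, f (b • x) ∂ρ) {b | b ≠ 0} κ ∧
      ∫ v, f v ∂polarMeasure κ m ρ =
        ∫ b in {b : K | b ≠ 0}, ‖b‖ ^ m • ∫ x, f (b • x) ∂ρ ∂κ := by
  have hsmul : Measurable fun z : K × V => z.1 • z.2 := by fun_prop
  have hdens : Measurable fun b : K => ‖b‖₊ ^ m := by fun_prop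
  have hint : Integrable (fun z : K × V => f (z.1 • z.2)) _ := hf.comp_measurable hsmul
  refine ⟨(integrable_withDensity_iff_integrable_smul hdens).1 hint.integral_prod_left, ?_⟩
  rw [polarMeasure, integral_map hsmul.aemeasurable hf.aestronglyMeasurable,
    integral_prod _ hint, integral_withDensity_eq_integral_smul hdens]
  rfl

end PolarMeasure

theorem IsGelfandLerayFamily.restrict_preimage_squareClass {K V : Type*}
    [NontriviallyNormedField K] [IsUltrametricDist K] [ProperSpace K] [NeZero (2 : K)]
    [MeasurableSpace K] [BorelSpace K] [NormedAddCommGroup V] [NormedSpace K V]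
    [IsUltrametricDist V] [ProperSpace V] [MeasurableSpace V] [BorelSpace V]
    {κ : Measure K} [κ.IsAddHaarMeasure] {ν : Measure V} [IsFiniteMeasureOnCompacts ν] {q : V → K}
    {μ : K → Measure V} (h : IsGelfandLerayFamily κ ν q μ) (hκ : IsHomogeneousMeasure K 1 κ)
    {n : ℕ} (hn : 1 ≤ n) (hν : IsHomogeneousMeasure K n ν) (hq : Continuous q)
    (hqs : ∀ (b : K) v, q (b • v) = b ^ 2 * q v) {a : K} (ha : a ≠ 0) :
    ν.restrict (q ⁻¹' squareClass a) =
      ((2⁻¹ * ‖2 * a‖ₑ) • polarMeasure κ (n - 1) (μ a)).restrict (q ⁻¹' squareClass a) := by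
  have := h.finite_on_compacts a ha
  have hopen := (isOpen_squareClass ha).preimage hq
  refine restrict_eq_of_eventually_measure_closedBall_eq hopen fun v hv => ?_
  obtain ⟨δ, hδ, hδa⟩ := nhds_basis_closedBall.mem_iff.1 (hopen.mem_nhds hv)
  filter_upwards [Ioc_mem_nhdsGT hδ] with r hr
  have hsub := (closedBall_subset_closedBall hr.2).trans hδa
  have hE : IsAdmissibleSet q (closedBall v r) := ⟨isCompact_closedBall v r,
    IsUltrametricDist.isOpen_closedBall v hr.1.ne',
    fun w hw => ne_zero_of_mem_squareClass ha (hsub hw)⟩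
  rw [Measure.smul_apply, polarMeasure_apply isClosed_closedBall.measurableSet, smul_eq_mul,
    h.measure_eq_lintegral_preimage_smul hκ hn hν hq hqs hE ha hsub]

section Padic

variable {p : ℕ} [Fact p.Prime]

theorem closedBall_zero_one_eq_biUnion :
    closedBall (0 : ℚ_[p]) 1 = ⋃ i ∈ Finset.range p, closedBall (i : ℚ_[p]) (p : ℝ)⁻¹ := by
  ext x
  simp only [mem_iUnion, Finset.mem_range, exists_prop]
  constructor
  · intro hx
    let y : ℤ_[p] := ⟨x, mem_closedBall_zero_iff.1 hx⟩
    have hlt : ‖x - (y.zmodRepr : ℚ_[p])‖ < 1 := by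
      simpa [PadicInt.norm_def] using y.norm_sub_zmodRepr_lt_one
    refine ⟨y.zmodRepr, y.zmodRepr_lt_p, ?_⟩
    rw [mem_closedBall_iff_norm, ← zpow_neg_one, Padic.norm_le_pow_iff_norm_lt_pow_add_one]
    simpa using hlt
  · rintro ⟨i, -, hi⟩
    have hi1 : (i : ℚ_[p]) ∈ closedBall 0 1 :=
      mem_closedBall_zero_iff.2 (IsUltrametricDist.norm_natCast_le_one ℚ_[p] i)
    have hp1 : (p : ℝ)⁻¹ ≤ 1 := inv_le_one_of_one_le₀ (mod_cast (Fact.out : p.Prime).one_le)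
    rw [IsUltrametricDist.closedBall_eq_of_mem hi1]
    exact closedBall_subset_closedBall hp1 hi

theorem pairwiseDisjoint_closedBall_natCast :
    (Finset.range p : Set ℕ).PairwiseDisjoint fun i => closedBall (i : ℚ_[p]) (p : ℝ)⁻¹ := by
  intro i hi j hj hij
  refine (IsUltrametricDist.closedBall_eq_or_disjoint _ _ _).resolve_left fun heq => hij ?_
  have hmem : (i : ℚ_[p]) ∈ closedBall (j : ℚ_[p]) (p : ℝ)⁻¹ :=
    heq ▸ mem_closedBall_self (by positivity)
  have hlt : ‖(((i : ℤ) - (j : ℤ) : ℤ) : ℚ_[p])‖ < 1 := by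
    push_cast
    exact (mem_closedBall_iff_norm.1 hmem).trans_lt
      (inv_lt_one_of_one_lt₀ (mod_cast (Fact.out : p.Prime).one_lt))
  rw [Padic.norm_intCast_lt_one_iff] at hlt
  exact (Nat.modEq_iff_dvd.2 hlt).symm.eq_of_lt_of_lt (Finset.mem_range.1 hi)
    (Finset.mem_range.1 hj)

theorem measure_closedBall_zero_one_padic [MeasurableSpace ℚ_[p]] [BorelSpace ℚ_[p]]
    (κ : Measure ℚ_[p]) [κ.IsAddHaarMeasure] :
    κ (closedBall 0 1) = p * κ (closedBall 0 (p : ℝ)⁻¹) := by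
  rw [closedBall_zero_one_eq_biUnion, measure_biUnion_finset pairwiseDisjoint_closedBall_natCast
    fun _ _ => isClosed_closedBall.measurableSet]
  simp only [Measure.addHaar_closedBall_center, Finset.sum_const, Finset.card_range, nsmul_eq_mul]

theorem distribHaarChar_padic_prime (hp : (p : ℚ_[p]) ≠ 0) :
    distribHaarChar ℚ_[p] (Units.mk0 (p : ℚ_[p]) hp) = ‖(p : ℚ_[p])‖₊ := by
  let := borel ℚ_[p]
  have : BorelSpace ℚ_[p] := ⟨rfl⟩
  let κ : Measure ℚ_[p] := Measure.addHaar
  refine distribHaarChar_eq_of_measure_smul_eq_mul (μ := κ)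
    (measure_closedBall_pos κ 0 one_pos).ne' (isCompact_closedBall 0 1).measure_ne_top ?_
  have hnorm : (‖(p : ℚ_[p])‖₊ : ℝ≥0∞) * p = 1 := by
    rw [← enorm_eq_nnnorm, ← ofReal_norm, Padic.norm_p, ← ENNReal.ofReal_natCast,
      ← ENNReal.ofReal_mul (by positivity),
      inv_mul_cancel₀ (mod_cast (Fact.out : p.Prime).ne_zero), ENNReal.ofReal_one]
  rw [measure_closedBall_zero_one_padic, Units.smul_mk0, smul_closedBall' hp, smul_zero, mul_one,
    Padic.norm_p, ← mul_assoc, hnorm, one_mul]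

theorem isHomogeneousMeasure_padic [MeasurableSpace ℚ_[p]] [BorelSpace ℚ_[p]]
    (κ : Measure ℚ_[p]) [κ.IsAddHaarMeasure] : IsHomogeneousMeasure ℚ_[p] 1 κ := by
  refine isHomogeneousMeasure_of_measure_closedBall fun b hb => ?_
  have hp : (p : ℚ_[p]) ≠ 0 := mod_cast (Fact.out : p.Prime).ne_zero
  have hpb : ‖(p : ℚ_[p]) ^ b.valuation‖ = ‖b‖ := by
    rw [norm_zpow, Padic.norm_p, inv_zpow', Padic.norm_eq_zpow_neg_valuation hb]
  have hsmul : Units.mk0 (p : ℚ_[p]) hp ^ b.valuation • closedBall (0 : ℚ_[p]) 1 =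
      closedBall 0 ‖b‖ := by
    rw [Units.smul_def, Units.val_zpow_eq_zpow_val, Units.val_mk0,
      smul_closedBall' (zpow_ne_zero _ hp), smul_zero, mul_one, hpb]
  rw [← hsmul, ← distribHaarChar_mul κ, map_zpow, distribHaarChar_padic_prime, ← nnnorm_zpow,
    pow_one, enorm_eq_nnnorm, show ‖(p : ℚ_[p]) ^ b.valuation‖₊ = ‖b‖₊ from NNReal.eq hpb]

end Padic

theorem continuous_quadraticForm {K V : Type*} [NontriviallyNormedField K] [CompleteSpace K]
    [NormedAddCommGroup V] [NormedSpace K V] [FiniteDimensional K V] (q : QuadraticForm K V) :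
    Continuous q := by
  obtain ⟨B, rfl⟩ := LinearMap.BilinMap.toQuadraticMap_surjective q
  have h : Continuous fun v => LinearMap.toContinuousBilinearMap B v v := by fun_prop
  exact h

theorem stmt3_general {K V : Type*} [NontriviallyNormedField K] [IsUltrametricDist K]
    [ProperSpace K] [NeZero (2 : K)] [MeasurableSpace K] [BorelSpace K] [NormedAddCommGroup V]
    [NormedSpace K V] [IsUltrametricDist V] [ProperSpace V] [MeasurableSpace V] [BorelSpace V]
    {κ : Measure K} [κ.IsAddHaarMeasure] (hκ : IsHomogeneousMeasure K 1 κ)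
    {ν : Measure V} [IsFiniteMeasureOnCompacts ν] {n : ℕ} (hn : 1 ≤ n)
    (hν : IsHomogeneousMeasure K n ν) {q : V → K} (hq : Continuous q)
    (hqs : ∀ (b : K) v, q (b • v) = b ^ 2 * q v) {μ : K → Measure V}
    (h : IsGelfandLerayFamily κ ν q μ) {a : K} (ha : a ≠ 0) {f : V → ℂ} (hf : Integrable f ν)
    (hfa : Function.support f ⊆ q ⁻¹' squareClass a) :
    IntegrableOn (fun b : K => ‖b‖ ^ (n - 1) • ∫ x, f (b • x) ∂μ a) {b | b ≠ 0} κ ∧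
      ∫ v, f v ∂ν = (1 / 2 * ‖2 * a‖) •
        ∫ b in {b : K | b ≠ 0}, ‖b‖ ^ (n - 1) • (∫ x, f (b • x) ∂μ a) ∂κ := by
  have := h.finite_on_compacts a ha
  have hrestrict := h.restrict_preimage_squareClass hκ hn hν hq hqs ha
  have hscale : 2⁻¹ * ‖2 * a‖ₑ ≠ 0 := by simp [ha, two_ne_zero]
  have hscale' : 2⁻¹ * ‖2 * a‖ₑ ≠ ∞ := ENNReal.mul_ne_top (by simp) enorm_ne_top
  have hpolar : Integrable f (polarMeasure κ (n - 1) (μ a)) := by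
    rw [← integrable_smul_measure hscale hscale',
      ← integrableOn_iff_integrable_of_support_subset hfa, IntegrableOn, ← hrestrict]
    exact hf.restrict
  obtain ⟨hint, heq⟩ := integral_polarMeasure hpolar
  refine ⟨hint, ?_⟩
  have hzero : ∀ v ∉ q ⁻¹' squareClass a, f v = 0 := Function.support_subset_iff'.1 hfa
  calc ∫ v, f v ∂ν
      = ∫ v, f v ∂((2⁻¹ * ‖2 * a‖ₑ) • polarMeasure κ (n - 1) (μ a)) := by
        rw [← setIntegral_eq_integral_of_forall_compl_eq_zero hzero, hrestrict,
          setIntegral_eq_integral_of_forall_compl_eq_zero hzero]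
    _ = _ := by
        rw [integral_smul_measure, heq, ENNReal.toReal_mul, toReal_enorm, ENNReal.toReal_inv,
          ENNReal.toReal_ofNat, one_div]

/-- integral identity of Lemma 6.4 of the paper, case `F = ℚ_p`: for
`a ≠ 0` and `f` continuous, compactly supported with support in
`Y_a = {v : q v ∈ a·(ℚ_p^×)²}`, the function `b ↦ |b|_p^{n-1} · ∫ f(b•x) dμ_a(x)` is
integrable on `ℚ_p∖{0}` and
`∫ f dv = (1/2)·|2a|_p · ∫_{b ≠ 0} (∫ f(b•x) dμ_a(x)) |b|_p^{n-1} db`. -/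
theorem stmt3 (p : ℕ) [Fact p.Prime] [MeasurableSpace ℚ_[p]] [BorelSpace ℚ_[p]]
    (μF : Measure ℚ_[p]) [μF.IsAddHaarMeasure] [SigmaFinite μF]
    (hμF : μF {x : ℚ_[p] | ‖x‖ ≤ 1} = 1)
    (n : ℕ) (hn : 1 ≤ n)
    (q : QuadraticForm ℚ_[p] (Fin n → ℚ_[p]))
    (hq : ∀ v : Fin n → ℚ_[p], (∀ w : Fin n → ℚ_[p], q (v + w) - q v - q w = 0) → v = 0)
    (μ : ℚ_[p] → Measure (Fin n → ℚ_[p]))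
    (hreg : ∀ a : ℚ_[p], a ≠ 0 → (μ a).Regular)
    (hsupp : ∀ a : ℚ_[p], a ≠ 0 → μ a {v : Fin n → ℚ_[p] | q v ≠ a} = 0)
    (hloc : ∀ f : (Fin n → ℚ_[p]) → ℂ, IsLocallyConstant f → HasCompactSupport f →
      (∀ v ∈ tsupport f, q v ≠ 0) →
      (∀ a : ℚ_[p], a ≠ 0 → ∀ᶠ a' in nhds a, (∫ v, f v ∂ μ a') = ∫ v, f v ∂ μ a) ∧
      ∃ K : Set ℚ_[p], IsCompact K ∧ (0 : ℚ_[p]) ∉ K ∧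
        ∀ a : ℚ_[p], a ≠ 0 → a ∉ K → (∫ v, f v ∂ μ a) = 0)
    (hGL : ∀ f : (Fin n → ℚ_[p]) → ℂ, IsLocallyConstant f → HasCompactSupport f →
      (∀ v ∈ tsupport f, q v ≠ 0) →
      (∫ v, f v ∂(Measure.pi fun _ : Fin n => μF))
        = ∫ a in {a : ℚ_[p] | a ≠ 0}, (∫ v, f v ∂ μ a) ∂ μF)
    (a : ℚ_[p]) (ha : a ≠ 0)
    (f : (Fin n → ℚ_[p]) → ℂ) (hf : Continuous f) (hfc : HasCompactSupport f)
    (hfY : tsupport f ⊆ {v : Fin n → ℚ_[p] | ∃ b : ℚ_[p], b ≠ 0 ∧ q v = a * b ^ 2}) :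
    IntegrableOn (fun b : ℚ_[p] => ‖b‖ ^ (n - 1) • ∫ x, f (b • x) ∂ μ a)
      {b : ℚ_[p] | b ≠ 0} μF ∧
    (∫ v, f v ∂(Measure.pi fun _ : Fin n => μF))
      = (1 / 2 * ‖2 * a‖) •
          ∫ b in {b : ℚ_[p] | b ≠ 0}, ‖b‖ ^ (n - 1) • (∫ x, f (b • x) ∂ μ a) ∂ μF := by
  have hfam : IsGelfandLerayFamily μF (Measure.pi fun _ => μF) q μ :=
    { finite_on_compacts := fun t ht => have := hreg t ht; inferInstance
      measure_ne := hsupp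
      eventually_eq := fun g hg => (hloc g hg.1 hg.2 hg.3).1
      exists_compact := fun g hg => (hloc g hg.1 hg.2 hg.3).2
      integral_eq := fun g hg => hGL g hg.1 hg.2 hg.3 }
  have hhom := isHomogeneousMeasure_padic μF
  exact stmt3_general hhom hn (by simpa using hhom.pi (ι := Fin n)) (continuous_quadraticForm q)
    (fun b v => by rw [QuadraticMap.map_smul, smul_eq_mul, sq]) hfam ha
    (hf.integrable_of_hasCompactSupport hfc) ((subset_tsupport f).trans hfY)
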